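/- Let R be a commutative ring and I ⊆ R a finitely generated ideal such that R is I-adically complete and separated. Let M be an R-module that is I-adically complete and separated, and let (m_i)_{i∈ι} be a family of elements of M whose images in M/IM form a basis of M/IM as an R/I-module. Let F̂ denote the I-adic completion of the free R-module ⊕_{i∈ι} R and φ : F̂ → M the map induced by sending the i-th basis vector to m_i. Then φ is surjective; if moreover M is flat as an R-module, then φ is an isomorphism, so M is pro-free (isomorphic to the I-adic completion of a free R-module). -/

import Mathlib

/-! If a linear map `f : N → M` is bijective modulo `I`, then so is `K ⊗ f` for every module `K`.
For flat `M` and an ideal `J`, take `K = J`: since `J ⊗ M → M` is injective with image `JM`, an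
element `x ∈ JN` with `f x ∈ IJM` lies in `IJN`. With `J = Iⁿ`, induction on `n` shows that `f` is
injective modulo every power of `I`, hence injective on completions. Surjectivity on completions
is the usual successive approximation and needs only surjectivity modulo `I`. The theorem is the
case where `N` is free and `f` sends the `i`-th basis vector to `mᵢ`. -/

open TensorProduct

section ReduceModIdeal

variable {R M N : Type*} [CommRing R] [AddCommGroup M] [Module R M] [AddCommGroup N] [Module R N]
  {I : Ideal R} {f : N →ₗ[R] M}

theorem reduceModIdeal_injective_iff :
    Function.Injective (f.reduceModIdeal I) ↔
      ∀ x, f x ∈ (I • ⊤ : Submodule R M) → x ∈ (I • ⊤ : Submodule R N) := by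
  simp only [injective_iff_map_eq_zero, (Submodule.Quotient.mk_surjective _).forall,
    LinearMap.reduceModIdeal_apply, Submodule.Quotient.mk_eq_zero]

theorem reduceModIdeal_surjective_iff :
    Function.Surjective (f.reduceModIdeal I) ↔
      Function.Surjective ((I • ⊤ : Submodule R M).mkQ ∘ₗ f) :=
  (Submodule.mkQ_surjective (I • ⊤ : Submodule R N)).of_comp_iff _ |>.symm

theorem reduceModIdeal_bijective_iff_lTensor :
    Function.Bijective (f.reduceModIdeal I) ↔ Function.Bijective (f.lTensor (R ⧸ I)) := by
  let eN := quotTensorEquivQuotSMul N I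
  let eM := quotTensorEquivQuotSMul M I
  have hcomm : (f.reduceModIdeal I).restrictScalars R ∘ₗ eN.toLinearMap =
      eM.toLinearMap ∘ₗ f.lTensor (R ⧸ I) := by
    ext x
    simp [eN, eM]
  have hcomm' : f.reduceModIdeal I ∘ eN = eM ∘ f.lTensor (R ⧸ I) := congrArg DFunLike.coe hcomm
  rw [← EquivLike.bijective_comp eN, hcomm', EquivLike.comp_bijective]

theorem reduceModIdeal_lTensor_bijective (hf : Function.Bijective (f.reduceModIdeal I))
    (K : Type*) [AddCommGroup K] [Module R K] :
    Function.Bijective ((f.lTensor K).reduceModIdeal I) := by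
  rw [reduceModIdeal_bijective_iff_lTensor] at hf ⊢
  let eN := TensorProduct.leftComm R K (R ⧸ I) N
  let eM := TensorProduct.leftComm R K (R ⧸ I) M
  have hcomm : (f.lTensor K).lTensor (R ⧸ I) ∘ₗ eN.toLinearMap =
      eM.toLinearMap ∘ₗ (f.lTensor (R ⧸ I)).lTensor K := by
    ext
    simp [eN, eM]
  have hcomm' : (f.lTensor K).lTensor (R ⧸ I) ∘ eN = eM ∘ (f.lTensor (R ⧸ I)).lTensor K :=
    congrArg DFunLike.coe hcomm
  rw [← EquivLike.bijective_comp eN, hcomm', EquivLike.comp_bijective]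
  exact (LinearEquiv.lTensor K (.ofBijective _ hf)).bijective

end ReduceModIdeal

section IdealTensor

variable {R : Type*} [CommRing R] (I J : Ideal R)
  (M : Type*) {N : Type*} [AddCommGroup M] [Module R M] [AddCommGroup N] [Module R N]

/-- The multiplication map `J ⊗ M → M`, `a ⊗ x ↦ a • x`, whose image is `JM`. It is written as
the inclusion `J → R` tensored with `M` so that flatness of `M` makes it injective at once. -/
def idealTensorToModule : J ⊗[R] M →ₗ[R] M :=
  (TensorProduct.lid R M).toLinearMap ∘ₗ J.subtype.rTensor M

theorem map_idealTensorToModule_smul_top :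
    (I • ⊤ : Submodule R (J ⊗[R] M)).map (idealTensorToModule J M) = (I * J) • ⊤ := by
  rw [Submodule.map_smul'', Submodule.map_top, idealTensorToModule, Ideal.subtype_rTensor_range,
    ← smul_assoc, Ideal.smul_eq_mul]

theorem idealTensorToModule_injective [Module.Flat R M] :
    Function.Injective (idealTensorToModule J M) :=
  (TensorProduct.lid R M).injective.comp
    (Module.Flat.rTensor_preserves_injective_linearMap _ J.subtype_injective)

variable {M}

theorem idealTensorToModule_lTensor (f : N →ₗ[R] M) (t : J ⊗[R] N) :
    idealTensorToModule J M (f.lTensor J t) = f (idealTensorToModule J N t) := by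
  induction t with
  | zero => simp only [map_zero]
  | tmul a x => simp [idealTensorToModule]
  | add s t hs ht => simp only [map_add, hs, ht]

end IdealTensor

section Flat

variable {R M N : Type*} [CommRing R] [AddCommGroup M] [Module R M] [AddCommGroup N] [Module R N]
  [Module.Flat R M] {I : Ideal R} {f : N →ₗ[R] M}

theorem mem_mul_smul_top_of_apply_mem (hf : Function.Bijective (f.reduceModIdeal I))
    {J : Ideal R} {x : N} (hx : x ∈ (J • ⊤ : Submodule R N))
    (hfx : f x ∈ ((I * J) • ⊤ : Submodule R M)) : x ∈ ((I * J) • ⊤ : Submodule R N) := by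
  rw [← Ideal.subtype_rTensor_range] at hx
  obtain ⟨t, rfl : idealTensorToModule J N t = x⟩ := hx
  rw [← idealTensorToModule_lTensor, ← map_idealTensorToModule_smul_top,
    ← SetLike.mem_coe, Submodule.map_coe, (idealTensorToModule_injective J M).mem_set_image] at hfx
  rw [← map_idealTensorToModule_smul_top]
  exact Submodule.mem_map_of_mem
    (reduceModIdeal_injective_iff.mp (reduceModIdeal_lTensor_bijective hf J).injective t hfx)

theorem reduceModIdeal_pow_injective (hf : Function.Bijective (f.reduceModIdeal I)) (n : ℕ) :
    Function.Injective (f.reduceModIdeal (I ^ n)) := by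
  rw [reduceModIdeal_injective_iff]
  induction n with
  | zero => simp
  | succ n ih =>
    intro x hfx
    have hx : x ∈ (I ^ n • ⊤ : Submodule R N) :=
      ih x (Submodule.pow_smul_top_le I M n.le_succ hfx)
    rw [pow_succ'] at hfx ⊢
    exact mem_mul_smul_top_of_apply_mem hf hx hfx

end Flat

section Completion

variable {R M N : Type*} [CommRing R] [AddCommGroup M] [Module R M] [AddCommGroup N] [Module R N]
  {I : Ideal R} {f : N →ₗ[R] M}

theorem adicCompletion_map_injective (hf : ∀ n, Function.Injective (f.reduceModIdeal (I ^ n))) :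
    Function.Injective (AdicCompletion.map I f) := by
  intro x y hxy
  ext n
  apply hf n
  rw [← AdicCompletion.map_val_apply, ← AdicCompletion.map_val_apply, hxy]

theorem adicCompletion_map_surjective (hf : Function.Surjective (f.reduceModIdeal I)) :
    Function.Surjective (AdicCompletion.map I f) :=
  AdicCompletion.map_surjective_of_mkQ_comp_surjective (reduceModIdeal_surjective_iff.mp hf)

theorem adicCompletion_map_bijective [Module.Flat R M]
    (hf : Function.Bijective (f.reduceModIdeal I)) :
    Function.Bijective (AdicCompletion.map I f) :=
  ⟨adicCompletion_map_injective (reduceModIdeal_pow_injective hf),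
    adicCompletion_map_surjective hf.surjective⟩

variable [IsAdicComplete I M]

variable (I f) in
/-- The extension of `f : N → M` to the `I`-adic completion of `N`, for `I`-adically complete `M`:
the completion of `f` followed by the identification of `M` with its own completion. -/
noncomputable def adicCompletionLift : AdicCompletion I N →ₗ[R] M :=
  (AdicCompletion.ofLinearEquiv I M).symm.toLinearMap ∘ₗ
    (AdicCompletion.map I f).restrictScalars R

theorem adicCompletionLift_of (x : N) :
    adicCompletionLift I f (AdicCompletion.of I N x) = f x :=
  (congrArg (AdicCompletion.ofLinearEquiv I M).symm (AdicCompletion.map_of I f x)).trans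
    (AdicCompletion.ofLinearEquiv_symm_of I (f x))

theorem adicCompletionLift_surjective (hf : Function.Surjective (f.reduceModIdeal I)) :
    Function.Surjective (adicCompletionLift I f) :=
  (AdicCompletion.ofLinearEquiv I M).symm.surjective.comp (adicCompletion_map_surjective hf)

theorem adicCompletionLift_bijective [Module.Flat R M]
    (hf : Function.Bijective (f.reduceModIdeal I)) :
    Function.Bijective (adicCompletionLift I f) :=
  (AdicCompletion.ofLinearEquiv I M).symm.bijective.comp (adicCompletion_map_bijective hf)

end Completion

section LinearCombination

variable {R M ι : Type*} [CommRing R] [AddCommGroup M] [Module R M] {I : Ideal R} {m : ι → M}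

theorem mem_smul_top_finsupp_iff {v : ι →₀ R} :
    v ∈ (I • ⊤ : Submodule R (ι →₀ R)) ↔ ∀ i, v i ∈ I := by
  rw [← Finsupp.submodule_top, ← Finsupp.submodule_smul]
  simp [Finsupp.mem_submodule_iff]

theorem reduceModIdeal_linearCombination_injective
    (hind : ∀ v : ι →₀ R,
      Finsupp.linearCombination R m v ∈ (I • ⊤ : Submodule R M) → ∀ i, v i ∈ I) :
    Function.Injective ((Finsupp.linearCombination R m).reduceModIdeal I) :=
  reduceModIdeal_injective_iff.mpr fun v hv => mem_smul_top_finsupp_iff.mpr (hind v hv)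

theorem reduceModIdeal_linearCombination_surjective
    (hspan : (⊤ : Submodule R M) ≤ Submodule.span R (Set.range m) ⊔ (I • ⊤ : Submodule R M)) :
    Function.Surjective ((Finsupp.linearCombination R m).reduceModIdeal I) := by
  rwa [reduceModIdeal_surjective_iff, ← LinearMap.range_eq_top, LinearMap.range_comp,
    Finsupp.range_linearCombination, Submodule.map_mkQ_eq_top, sup_comm, ← top_le_iff]

end LinearCombination

theorem stmt6_general {R M ι : Type*} [CommRing R] [AddCommGroup M] [Module R M]
    (I : Ideal R) [IsAdicComplete I M] (m : ι → M)
    (hspan : (⊤ : Submodule R M) ≤ Submodule.span R (Set.range m) ⊔ (I • ⊤ : Submodule R M))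
    (hind : ∀ c : ι →₀ R,
      (c.sum fun i a => a • m i) ∈ (I • ⊤ : Submodule R M) → ∀ i, c i ∈ I) :
    ∃ φ : AdicCompletion I (ι →₀ R) →ₗ[R] M,
      (∀ v : ι →₀ R,
        φ (AdicCompletion.of I (ι →₀ R) v) = Finsupp.linearCombination R m v) ∧
      Function.Surjective φ ∧
      (Module.Flat R M → Function.Bijective φ) := by
  have hinj := reduceModIdeal_linearCombination_injective hind
  have hsurj := reduceModIdeal_linearCombination_surjective hspan
  exact ⟨adicCompletionLift I (Finsupp.linearCombination R m), adicCompletionLift_of,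
    adicCompletionLift_surjective hsurj, fun _ => adicCompletionLift_bijective ⟨hinj, hsurj⟩⟩


/-- (Completed Nakayama.) Let `R` be a commutative ring, `I` a finitely
generated ideal with `R` `I`-adically complete and separated, and `M` an `I`-adically
complete and separated `R`-module.  Suppose `(mᵢ)` is a family of elements of `M` whose
residue classes form a basis of `M/IM` over `R/I` (expressed as: the `mᵢ` span `M`
modulo `IM`, and any finite `R`-linear combination of the `mᵢ` lying in `IM` has all its
coefficients in `I`).  Then the map `φ` from the `I`-adic completion of the free module
`⊕ᵢ R` to `M` induced by sending the `i`-th basis vector to `mᵢ` is surjective; if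
moreover `M` is flat over `R`, then `φ` is an isomorphism, i.e. `M` is pro-free. -/
theorem stmt6 {R M ι : Type*} [CommRing R] [AddCommGroup M] [Module R M]
    (I : Ideal R) (hfg : I.FG) [IsAdicComplete I R] [IsAdicComplete I M]
    (m : ι → M)
    (hspan : (⊤ : Submodule R M) ≤ Submodule.span R (Set.range m) ⊔ (I • ⊤ : Submodule R M))
    (hind : ∀ c : ι →₀ R,
      (c.sum fun i a => a • m i) ∈ (I • ⊤ : Submodule R M) → ∀ i, c i ∈ I) :
    ∃ φ : AdicCompletion I (ι →₀ R) →ₗ[R] M,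
      (∀ v : ι →₀ R,
        φ (AdicCompletion.of I (ι →₀ R) v) = Finsupp.linearCombination R m v) ∧
      Function.Surjective φ ∧
      (Module.Flat R M → Function.Bijective φ) := by
  exact stmt6_general I m hspan hind
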